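/- For all sufficiently large n, starting from the path P_n (in which agent v_i buys the edge {v_i, v_{i+1}} for 1 ≤ i ≤ n−1), there exists a sequence of improving responses in the degAOG of length at least n²/16, i.e. a sequence of at least n²/16 steps in each of which one agent adds a single edge to her strategy and thereby strictly decreases her cost; hence adversarially scheduled improving response dynamics in the degAOG starting from P_n can take Θ(n²) steps. -/

import Mathlib

/-!
Split the path into the buyers `0, …, B - 1` and the rest, which acts as a long tail.  The nodes
`B + 1, …, B + J` are treated one after the other; when it is the turn of `j`, all buyers
successively buy an edge to `j`.  At that time the tail beyond `j` is still untouched, so every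
path from a buyer to a node `w ≥ j` goes through `j`.  A buyer who is not adjacent to `j` hence has
distance at least `w - j + 2` to `w`, and the new edge shortens this to `w - j + 1`
(`edist_lower`, `edist_upper`).  The purchase therefore gains at least `n - j`, whereas its price
is the current degree of `j`, which is at most `B + 1` (`deg_target_le`).  All purchases are
improving as long as `2 B + J + 1 < n`, and taking `B = ⌊n/4⌋ - 1` and `J = 2 ⌊n/4⌋` gives
`B J ≥ n² / 16` of them.
-/

/-!
Degree price network creation games (degNCG / degkNCG / degAOG / degkAOG).

A strategy vector assigns to each agent `u` a finite set `st u` of nodes to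
which `u` buys an edge.  The induced graph has an edge `{u,v}` iff `v ∈ st u`
or `u ∈ st v`.  The cost of agent `u` is the sum of `deg v - 1` over all `v`
to which `u` bought an edge, plus the sum of (extended, i.e. `⊤` when
unreachable) graph distances from `u` to all nodes.
-/

/-- A strategy vector: each agent picks the set of nodes it buys edges to. -/
abbrev Strategy (V : Type) := V → Finset V

variable {V : Type} [Fintype V] [DecidableEq V]

/-- The network induced by a strategy vector: `{u,v}` is an edge iff
`v ∈ st u` or `u ∈ st v`. -/
def netG (st : Strategy V) : SimpleGraph V :=
  SimpleGraph.fromRel (fun u v => v ∈ st u)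

/-- The degree of a node in the induced network. -/
noncomputable def deg (st : Strategy V) (v : V) : ℕ :=
  letI : DecidableRel (netG st).Adj := Classical.decRel _
  (netG st).degree v

/-- The cost of agent `u`: degree-prices of the bought edges plus the sum of
the distances to all nodes (`⊤` if some node is unreachable). -/
noncomputable def cost (st : Strategy V) (u : V) : ℕ∞ :=
  ((∑ v ∈ st u, (deg st v - 1) : ℕ) : ℕ∞) + ∑ w, (netG st).edist u w

/-- A strategy vector is valid if nobody buys a self-loop and every edge has
exactly one owner. -/
def Valid (st : Strategy V) : Prop :=
  (∀ u, u ∉ st u) ∧ (∀ u v, v ∈ st u → u ∉ st v)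

/-- Pure Nash equilibrium of the degNCG: no agent can strictly decrease her
cost by unilaterally switching to any other strategy. -/
def IsNE (st : Strategy V) : Prop :=
  ∀ (u : V) (t : Finset V), u ∉ t →
    cost st u ≤ cost (Function.update st u t) u

/-- `k`-local Nash equilibrium of the degkNCG: no agent can strictly decrease
her cost by a deviation in which every newly bought edge goes to a node at
distance at most `k` in the current graph. -/
def IskNE (k : ℕ) (st : Strategy V) : Prop :=
  ∀ (u : V) (t : Finset V), u ∉ t →
    (∀ v ∈ t \ st u, (netG st).edist u v ≤ k) →
    cost st u ≤ cost (Function.update st u t) u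

/-- Equilibrium of the add-only game degAOG: no agent can strictly decrease
her cost by adding edges (deviations are supersets of the current strategy). -/
def IsAOEq (st : Strategy V) : Prop :=
  ∀ (u : V) (t : Finset V), u ∉ t → st u ⊆ t →
    cost st u ≤ cost (Function.update st u t) u

/-- Equilibrium of the `k`-local add-only game degkAOG. -/
def IskAOEq (k : ℕ) (st : Strategy V) : Prop :=
  ∀ (u : V) (t : Finset V), u ∉ t → st u ⊆ t →
    (∀ v ∈ t \ st u, (netG st).edist u v ≤ k) →
    cost st u ≤ cost (Function.update st u t) u

/-- The social cost: the sum of all agents' costs. -/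
noncomputable def social (st : Strategy V) : ℕ∞ :=
  ∑ u, cost st u

/-- The center sponsored spanning star on `n + 2` nodes: agent `0` buys an
edge to every other agent, everybody else buys nothing. -/
def starStrat (n : ℕ) : Strategy (Fin (n + 2)) := fun u =>
  if u = 0 then ({0} : Finset (Fin (n + 2)))ᶜ else ∅

/-- The path `P_n = v_0 v_1 ⋯ v_{n-1}` as a strategy vector: agent `v_i` buys
the edge to `v_{i+1}`. -/
def pathStrat (n : ℕ) : Strategy (Fin n) := fun i =>
  if h : (i : ℕ) + 1 < n then {⟨(i : ℕ) + 1, h⟩} else ∅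

/-! ### Effect of a single purchase on the cost -/

section General

open Classical in
lemma deg_eq_card (st : Strategy V) (v : V) :
    deg st v = (Finset.univ.filter (fun w => (netG st).Adj v w)).card := by
  unfold deg
  rw [← SimpleGraph.card_neighborFinset_eq_degree]
  congr 1
  ext w
  simp

lemma netG_adj (st : Strategy V) (a b : V) :
    (netG st).Adj a b ↔ a ≠ b ∧ (b ∈ st a ∨ a ∈ st b) := by
  simp [netG, SimpleGraph.fromRel_adj]

lemma netG_update_adj (st : Strategy V) (u v : V) (hv : v ≠ u) (a b : V) :
    (netG (Function.update st u (insert v (st u)))).Adj a b ↔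
      (netG st).Adj a b ∨ (a = u ∧ b = v) ∨ (a = v ∧ b = u) := by
  simp only [netG_adj, Function.update_apply]
  by_cases ha : a = u <;> by_cases hb : b = u <;> simp [ha, hb] <;> grind

lemma deg_update_le (st : Strategy V) (u v x : V) (hv : v ≠ u) (hxu : x ≠ u) (hxv : x ≠ v) :
    deg (Function.update st u (insert v (st u))) x ≤ deg st x := by
  classical
  rw [deg_eq_card, deg_eq_card]
  apply Finset.card_le_card
  intro w
  simp only [Finset.mem_filter, Finset.mem_univ, true_and, netG_update_adj st u v hv]
  tauto

lemma deg_update_target_le (st : Strategy V) (u v : V) (hv : v ≠ u) :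
    deg (Function.update st u (insert v (st u))) v ≤ deg st v + 1 := by
  classical
  rw [deg_eq_card, deg_eq_card]
  refine le_trans (Finset.card_le_card ?_) (Finset.card_insert_le u _)
  intro w
  simp only [Finset.mem_filter, Finset.mem_univ, true_and, netG_update_adj st u v hv,
    Finset.mem_insert]
  tauto

/-- Buying the edge `uv` is improving if it saves at least `c` in the distance sum and the current
degree of `v` is less than `c`: the price of the new edge is exactly that degree, and the prices
of the other edges of `u` do not change. -/
lemma cost_update_lt (st : Strategy V) (u v : V) (hv : v ≠ u) (hvu : v ∉ st u) (huu : u ∉ st u)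
    (c : ℕ) (hc : deg st v < c)
    (hfin : ∑ w, (netG (Function.update st u (insert v (st u)))).edist u w ≠ ⊤)
    (hd : ∑ w, (netG (Function.update st u (insert v (st u)))).edist u w + c ≤
      ∑ w, (netG st).edist u w) :
    cost (Function.update st u (insert v (st u))) u < cost st u := by
  unfold cost
  rw [Function.update_self, Finset.sum_insert hvu]
  have h1 := deg_update_target_le st u v hv
  have h2 : ∑ x ∈ st u, (deg (Function.update st u (insert v (st u))) x - 1) ≤
      ∑ x ∈ st u, (deg st x - 1) := by
    refine Finset.sum_le_sum fun x hx => Nat.sub_le_sub_right (deg_update_le st u v x hv ?_ ?_) 1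
    · rintro rfl; exact huu hx
    · rintro rfl; exact hvu hx
  refine lt_of_lt_of_le ?_ (add_le_add_right hd _)
  lift ∑ w, (netG (Function.update st u (insert v (st u)))).edist u w to ℕ using hfin with D
  norm_cast
  omega

/-- A function that grows by at most one along each edge bounds distances from below. -/
lemma le_edist_of_lipschitz (G : SimpleGraph V) (f : V → ℕ)
    (hf : ∀ a b, G.Adj a b → f b ≤ f a + 1) (a b : V) : ((f b - f a : ℕ) : ℕ∞) ≤ G.edist a b := by
  have key : ∀ {a b : V} (p : G.Walk a b), f b ≤ f a + p.length := by
    intro a b p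
    induction p with
    | nil => simp
    | cons h p ih =>
      have := hf _ _ h
      simp only [SimpleGraph.Walk.length_cons]
      omega
  refine le_iInf fun p => ?_
  have := key p
  norm_cast
  omega

end General

/-! ### The purchase schedule -/

/-- Along consecutive nodes the distance is at most the difference of the indices. -/
lemma edist_le_sub {n : ℕ} (G : SimpleGraph (Fin n))
    (hG : ∀ a b : Fin n, (b : ℕ) = a + 1 → G.Adj a b) (a : Fin n) :
    ∀ (d : ℕ) (b : Fin n), (b : ℕ) = a + d → G.edist a b ≤ d := by
  intro d
  induction d with
  | zero =>
    intro b hb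
    obtain rfl : b = a := Fin.ext (by omega)
    simp
  | succ d ih =>
    intro b hb
    have hlt : (a : ℕ) + d < n := by have := b.isLt; omega
    have h1 := ih ⟨a + d, hlt⟩ rfl
    have h2 : G.edist ⟨a + d, hlt⟩ b = 1 :=
      SimpleGraph.edist_eq_one_iff_adj.2 (hG _ _ (by simp; omega))
    calc G.edist a b ≤ G.edist a ⟨a + d, hlt⟩ + G.edist ⟨a + d, hlt⟩ b :=
          SimpleGraph.edist_triangle
      _ ≤ d + 1 := by rw [h2]; exact add_le_add_left h1 1
      _ = ((d + 1 : ℕ) : ℕ∞) := by push_cast; rfl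

/-- The strategy vector after `t` purchases.  Purchase number `t = a * B + b` with `b < B` is the
purchase of the edge from buyer `b` to node `B + 1 + a`. -/
def stage (n B t : ℕ) : Strategy (Fin n) := fun u =>
  Finset.univ.filter fun v => (v : ℕ) = u + 1 ∨
    ((u : ℕ) < B ∧ B + 1 ≤ (v : ℕ) ∧ (v - (B + 1)) * B + u < t)

lemma mem_stage {n B t : ℕ} (u v : Fin n) : v ∈ stage n B t u ↔ (v : ℕ) = u + 1 ∨
    ((u : ℕ) < B ∧ B + 1 ≤ (v : ℕ) ∧ ((v : ℕ) - (B + 1)) * B + u < t) := by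
  simp [stage]

lemma stage_zero (n B : ℕ) : stage n B 0 = pathStrat n := by
  funext u
  ext v
  rw [mem_stage]
  unfold pathStrat
  split_ifs with h
  · simp [Fin.ext_iff]
  · have := v.isLt
    simp
    omega

/-- Uniqueness of the representation `a * B + b` with `b < B`. -/
lemma digits_unique {B a b a' b' : ℕ} (hb : b < B) (hb' : b' < B)
    (h : a * B + b = a' * B + b') : a = a' ∧ b = b' := by
  have h1 : (a * B + b) / B = a := by
    rw [mul_comm, Nat.mul_add_div (by omega), Nat.div_eq_of_lt hb, add_zero]
  have h2 : (a' * B + b') / B = a' := by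
    rw [mul_comm, Nat.mul_add_div (by omega), Nat.div_eq_of_lt hb', add_zero]
  have h3 : a = a' := by rw [← h1, ← h2, h]
  subst h3
  exact ⟨rfl, by omega⟩

/-- Purchases made earlier than `a * B + b` belong to rounds up to `a`. -/
lemma block_le {B a b a' b' : ℕ} (hb : b < B) (h : a' * B + b' < a * B + b) : a' ≤ a := by
  by_contra! hlt
  have := Nat.mul_le_mul_right B (Nat.succ_le_of_lt hlt)
  rw [Nat.succ_mul] at this
  omega

lemma stage_succ {n B a b : ℕ} (hb : b < B) (u v : Fin n) (hu : (u : ℕ) = b)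
    (hv : (v : ℕ) = B + 1 + a) :
    stage n B (a * B + b + 1) =
      Function.update (stage n B (a * B + b)) u (insert v (stage n B (a * B + b) u)) := by
  funext x
  ext y
  by_cases hx : x = u
  · subst hx
    rw [Function.update_self, Finset.mem_insert, mem_stage, mem_stage]
    constructor
    · rintro (h | ⟨h1, h2, h3⟩)
      · exact Or.inr (Or.inl h)
      · rcases Nat.lt_succ_iff_lt_or_eq.1 h3 with h4 | h4
        · exact Or.inr (Or.inr ⟨h1, h2, h4⟩)
        · have := (digits_unique h1 hb h4).1
          exact Or.inl (Fin.ext (by omega))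
    · rintro (rfl | h | ⟨h1, h2, h3⟩)
      · refine Or.inr ⟨by omega, by omega, ?_⟩
        rw [hv, hu, Nat.add_sub_cancel_left]
        exact Nat.lt_succ_self _
      · exact Or.inl h
      · exact Or.inr ⟨h1, h2, h3.trans (Nat.lt_succ_self _)⟩
  · rw [Function.update_of_ne hx, mem_stage, mem_stage]
    refine or_congr Iff.rfl (and_congr_right fun h1 => and_congr_right fun _ => ?_)
    constructor
    · intro h
      rcases Nat.lt_succ_iff_lt_or_eq.1 h with h4 | h4
      · exact h4
      · have := (digits_unique h1 hb h4).2
        exact absurd (Fin.ext (by omega)) hx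
    · exact fun h => h.trans (Nat.lt_succ_self _)

/-- The edges present just before purchase `a * B + b`: path edges and earlier purchases, all of
which end at a node with index at most `B + 1 + a`. -/
lemma stage_mem_cases {n B a b : ℕ} (hb : b < B) {x y : Fin n}
    (h : y ∈ stage n B (a * B + b) x) :
    (y : ℕ) = x + 1 ∨ ((x : ℕ) < B ∧ B + 1 ≤ (y : ℕ) ∧
      ((y : ℕ) < B + 1 + a ∨ ((y : ℕ) = B + 1 + a ∧ (x : ℕ) < b))) := by
  rw [mem_stage] at h
  rcases h with h | ⟨h1, h2, h3⟩
  · exact Or.inl h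
  · refine Or.inr ⟨h1, h2, ?_⟩
    have h4 := block_le hb h3
    rcases lt_or_eq_of_le h4 with h5 | h5
    · left; omega
    · right
      rw [h5] at h3
      omega

/-! ### Each purchase is improving -/

/-- The degree of the target of a purchase: its two path neighbours and the earlier buyers. -/
lemma deg_target_le {n B a b : ℕ} (hb : b < B) (v : Fin n) (hv : (v : ℕ) = B + 1 + a) :
    deg (stage n B (a * B + b)) v ≤ b + 2 := by
  classical
  rw [deg_eq_card]
  have hcard : (insert (B + a) (insert (B + a + 2) (Finset.range b))).card ≤ b + 2 := by
    refine (Finset.card_insert_le _ _).trans ?_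
    have := Finset.card_insert_le (B + a + 2) (Finset.range b)
    rw [Finset.card_range] at this
    omega
  refine le_trans ?_ hcard
  rw [← Finset.card_map Fin.valEmbedding]
  apply Finset.card_le_card
  intro w hw
  simp only [Finset.mem_map, Finset.mem_filter, Finset.mem_univ, true_and,
    Fin.valEmbedding_apply, netG_adj] at hw
  obtain ⟨x, ⟨-, hx⟩, rfl⟩ := hw
  simp only [Finset.mem_insert, Finset.mem_range]
  rcases hx with hx | hx
  · rcases stage_mem_cases hb hx with h | h <;> omega
  · rcases stage_mem_cases hb hx with h | h <;> omega

/-- Before purchase `a * B + b` the buyer `u` is not adjacent to the target `v`, and `v`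
separates her from the tail, so her distance to `w ≥ v` is at least `w - v + 2`. -/
lemma edist_lower {n B a b : ℕ} (hb : b < B) (u v w : Fin n) (hu : (u : ℕ) = b)
    (hv : (v : ℕ) = B + 1 + a) (hw : v ≤ w) :
    ((w - v + 2 : ℕ) : ℕ∞) ≤ (netG (stage n B (a * B + b))).edist u w := by
  classical
  -- A 1-Lipschitz potential vanishing at `u`; a node before `v` has an edge to a node `≥ v` only
  -- if it is adjacent to `v` itself, and then the potential is 1.
  let f : Fin n → ℕ := fun x =>
    if v ≤ x then x - v + 2 else if (netG (stage n B (a * B + b))).Adj x v then 1 else 0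
  have hfu : f u = 0 := by
    have h1 : ¬ v ≤ u := by rw [Fin.le_def]; omega
    have h2 : ¬ (netG (stage n B (a * B + b))).Adj u v := by
      rw [netG_adj]
      rintro ⟨-, h | h⟩
      · rcases stage_mem_cases hb h with h | h <;> omega
      · rcases stage_mem_cases hb h with h | h <;> omega
    simp [f, h1, h2]
  have hfw : f w = w - v + 2 := by simp [f, hw]
  have hlow : ∀ x, ¬ v ≤ x → f x ≤ 1 := by
    intro x hx
    simp only [f, hx, if_false]
    split_ifs <;> omega
  have hlip : ∀ x y, (netG (stage n B (a * B + b))).Adj x y → f y ≤ f x + 1 := by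
    intro x y hxy
    by_cases hy : v ≤ y
    · have hfy : f y = y - v + 2 := by simp [f, hy]
      by_cases hx : v ≤ x
      · have hfx : f x = x - v + 2 := by simp [f, hx]
        rw [netG_adj] at hxy
        rw [Fin.le_def] at hx hy
        rcases hxy.2 with h | h
        · rcases stage_mem_cases hb h with h | h <;> omega
        · rcases stage_mem_cases hb h with h | h <;> omega
      · have hyv : y = v := by
          have h' := hxy
          rw [netG_adj] at h'
          rw [Fin.le_def] at hx hy
          apply Fin.ext
          rcases h'.2 with h | h
          · rcases stage_mem_cases hb h with h | h <;> omega
          · rcases stage_mem_cases hb h with h | h <;> omega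
        subst hyv
        have hfx : f x = 1 := by simp [f, hx, hxy]
        omega
    · have := hlow y hy
      omega
  have := le_edist_of_lipschitz _ f hlip u w
  rwa [hfu, hfw, Nat.sub_zero] at this

lemma stage_path_adj {n B t : ℕ} (x y : Fin n) (h : (y : ℕ) = x + 1) :
    (netG (stage n B t)).Adj x y := by
  rw [netG_adj]
  refine ⟨?_, Or.inl ((mem_stage _ _).2 (Or.inl h))⟩
  rintro rfl
  omega

lemma stage_edist_ne_top {n B t : ℕ} (u w : Fin n) : (netG (stage n B t)).edist u w ≠ ⊤ := by
  rcases le_total u w with h | h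
  · exact ne_top_of_le_ne_top (ENat.natCast_ne_top _)
      (edist_le_sub _ stage_path_adj u (w - u) w (by rw [Fin.le_def] at h; omega))
  · rw [SimpleGraph.edist_comm]
    exact ne_top_of_le_ne_top (ENat.natCast_ne_top _)
      (edist_le_sub _ stage_path_adj w (u - w) u (by rw [Fin.le_def] at h; omega))

lemma edist_upper {n B t : ℕ} (u v w : Fin n) (huv : (netG (stage n B t)).Adj u v) (hw : v ≤ w) :
    (netG (stage n B t)).edist u w ≤ ((w - v + 1 : ℕ) : ℕ∞) := by
  have h1 := edist_le_sub _ (stage_path_adj (B := B) (t := t)) v (w - v) w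
    (by rw [Fin.le_def] at hw; omega)
  calc (netG (stage n B t)).edist u w
      ≤ (netG (stage n B t)).edist u v + (netG (stage n B t)).edist v w :=
        SimpleGraph.edist_triangle
    _ ≤ 1 + ((w - v : ℕ) : ℕ∞) := by
        rw [SimpleGraph.edist_eq_one_iff_adj.2 huv]
        exact add_le_add_right h1 1
    _ = ((w - v + 1 : ℕ) : ℕ∞) := by push_cast; exact add_comm _ _

/-- Purchase number `a * B + b` is improving. -/
lemma cost_stage_lt {n B J a b : ℕ} (hn : 2 * B + J + 1 < n) (hb : b < B) (ha : a < J)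
    (u v : Fin n) (hu : (u : ℕ) = b) (hv : (v : ℕ) = B + 1 + a)
    (hvu : v ∉ stage n B (a * B + b) u) :
    cost (stage n B (a * B + b + 1)) u < cost (stage n B (a * B + b)) u := by
  have hne : v ≠ u := by rintro rfl; omega
  have hupd := stage_succ hb u v hu hv
  have hadj : (netG (stage n B (a * B + b + 1))).Adj u v := by
    rw [hupd, netG_update_adj _ _ _ hne]
    exact Or.inr (Or.inl ⟨rfl, rfl⟩)
  have hmono : netG (stage n B (a * B + b)) ≤ netG (stage n B (a * B + b + 1)) := by
    intro x y hxy
    rw [hupd, netG_update_adj _ _ _ hne]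
    exact Or.inl hxy
  have hdeg := deg_target_le hb v hv
  rw [hupd]
  refine cost_update_lt _ u v hne hvu ?_ (n - v) (by omega) ?_ ?_
  · rw [mem_stage]
    rintro (h | h) <;> omega
  · rw [← hupd]
    exact WithTop.sum_ne_top.2 fun w _ => stage_edist_ne_top u w
  · rw [← hupd]
    -- The saving `n - v` is distributed as one unit to each `w ≥ v`.
    have hcount : (((n - v : ℕ)) : ℕ∞) = ∑ w : Fin n, if v ≤ w then (1 : ℕ∞) else 0 := by
      rw [Finset.sum_boole, ← Fin.card_Ici v]
      congr 2
      ext w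
      simp
    rw [hcount, ← Finset.sum_add_distrib]
    refine Finset.sum_le_sum fun w _ => ?_
    split_ifs with hw
    · calc (netG (stage n B (a * B + b + 1))).edist u w + 1
          ≤ ((w - v + 1 : ℕ) : ℕ∞) + 1 := add_le_add_left (edist_upper u v w hadj hw) 1
        _ = ((w - v + 2 : ℕ) : ℕ∞) := by norm_cast
        _ ≤ _ := edist_lower hb u v w hu hv hw
    · rw [add_zero]
      exact SimpleGraph.edist_anti hmono

/-- For all sufficiently large `n`, starting from the path `P_n`
there is a sequence of improving single-edge additions in the degAOG of length
at least `n²/16` (stated as `n² ≤ 16 L`); hence adversarially scheduled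
improving response dynamics in the degAOG starting from `P_n` can take
`Θ(n²)` steps. -/
theorem path_long_dynamics :
    ∃ N : ℕ, ∀ n : ℕ, N ≤ n →
      ∃ (L : ℕ) (seq : Fin (L + 1) → Strategy (Fin n)),
        n ^ 2 ≤ 16 * L ∧
        seq 0 = pathStrat n ∧
        (∀ i : Fin L, ∃ (u v : Fin n),
          v ≠ u ∧ v ∉ seq i.castSucc u ∧ u ∉ seq i.castSucc v ∧
          seq i.succ =
            Function.update (seq i.castSucc) u (insert v (seq i.castSucc u)) ∧
          cost (seq i.succ) u < cost (seq i.castSucc) u) := by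
  refine ⟨16, fun n hn => ?_⟩
  obtain ⟨B, J, hBJ, hB, hL⟩ : ∃ B J : ℕ, 2 * B + J + 1 < n ∧ 0 < B ∧ n ^ 2 ≤ 16 * (J * B) := by
    obtain ⟨k, r, hk, hr⟩ : ∃ k r, n = 4 * (k + 1) + r ∧ r < 4 :=
      ⟨n / 4 - 1, n % 4, by omega, by omega⟩
    refine ⟨k, 2 * (k + 1), by omega, by omega, ?_⟩
    have h1 : n ≤ 4 * k + 7 := by omega
    have h2 : 3 ≤ k := by omega
    calc n ^ 2 ≤ (4 * k + 7) ^ 2 := Nat.pow_le_pow_left h1 2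
      _ ≤ 16 * (2 * (k + 1) * k) := by nlinarith
  refine ⟨J * B, fun t => stage n B t, hL, stage_zero n B, fun i => ?_⟩
  obtain ⟨a, b, hi, ha, hb⟩ : ∃ a b : ℕ, (i : ℕ) = a * B + b ∧ a < J ∧ b < B :=
    ⟨i / B, i % B, (Nat.div_add_mod' _ _).symm,
      Nat.div_lt_of_lt_mul (i.isLt.trans_eq (mul_comm _ _)), Nat.mod_lt _ hB⟩
  obtain ⟨u, hu⟩ : ∃ u : Fin n, (u : ℕ) = b := ⟨⟨b, by omega⟩, rfl⟩
  obtain ⟨v, hv⟩ : ∃ v : Fin n, (v : ℕ) = B + 1 + a := ⟨⟨B + 1 + a, by omega⟩, rfl⟩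
  simp only [Fin.val_castSucc, Fin.val_succ, hi]
  have hvu : v ∉ stage n B (a * B + b) u := by
    intro h
    rcases stage_mem_cases hb h with h | h <;> omega
  refine ⟨u, v, ?_, hvu, ?_, stage_succ hb u v hu hv, cost_stage_lt hBJ hb ha u v hu hv hvu⟩
  · intro h
    have := congrArg Fin.val h
    omega
  · intro h
    rcases stage_mem_cases hb h with h | h <;> omega
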